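/- Let L be a Leibniz algebra over a field, let I be the ideal of L generated by squares, and let G be a subalgebra of L with L = G ⊕ I as vector spaces; let π_G and π_I denote the projections onto G and I associated with this decomposition. Then every derivation d of L satisfies d(I) ⊆ I, and the linear maps d_0 and d_1 defined by d_0(x) = π_G(d(π_G(x))) + d(π_I(x)) and d_1(x) = π_I(d(π_G(x))) for x ∈ L are both derivations of L. -/

import Mathlib

/-!
Write `I` for the ideal generated by the squares. The Leibniz identity gives `[x, [y, y]] = 0`, and
the right annihilator `{v | [L, v] = 0}` is an ideal, so `[L, I] = 0` (`br_squaresIdeal_eq_zero`).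
A derivation sends `[x, x]` to `[d x, x] + [x, d x]`, a polarised square, so `I ⊓ d⁻¹(I)` is an ideal
containing the squares and `d(I) ⊆ I` (`derivation_mem_squaresIdeal`).

Hence `[x, y] = [x, πG y]`, and its `G`-component is `[πG x, πG y]`. Applying `πI ∘ d` to the latter
and discarding the terms in `G` and in `[L, I] = 0` leaves `[πI (d (πG x)), πG y]`, which equals
`[d₁ x, y] + [x, d₁ y]`. So `d₁` is a derivation, and so is `d₀ = d - d₁`.
-/

/-- `J` is a (two-sided) ideal of the Leibniz algebra `(L, br)`. -/
def IsLeibnizIdeal {F L : Type*} [Field F] [AddCommGroup L] [Module F L]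
    (br : L →ₗ[F] L →ₗ[F] L) (J : Submodule F L) : Prop :=
  (∀ a ∈ J, ∀ y : L, br a y ∈ J) ∧ (∀ a ∈ J, ∀ y : L, br y a ∈ J)

/-- The ideal of the Leibniz algebra `(L, br)` generated by the squares `[x,x]`. -/
def squaresIdeal {F L : Type*} [Field F] [AddCommGroup L] [Module F L]
    (br : L →ₗ[F] L →ₗ[F] L) : Submodule F L :=
  sInf {J | (∀ x : L, br x x ∈ J) ∧ IsLeibnizIdeal br J}

section

variable {F L : Type*} [Field F] [AddCommGroup L] [Module F L] {br : L →ₗ[F] L →ₗ[F] L}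

lemma sq_mem_squaresIdeal (x : L) : br x x ∈ squaresIdeal br :=
  Submodule.mem_sInf.2 fun _ hJ => hJ.1 x

lemma squaresIdeal_le {J : Submodule F L} (hsq : ∀ x, br x x ∈ J) (hJ : IsLeibnizIdeal br J) :
    squaresIdeal br ≤ J :=
  sInf_le ⟨hsq, hJ⟩

lemma squaresIdeal_isLeibnizIdeal : IsLeibnizIdeal br (squaresIdeal br) :=
  ⟨fun a ha y => Submodule.mem_sInf.2 fun J hJ => hJ.2.1 a (Submodule.mem_sInf.1 ha J hJ) y,
    fun a ha y => Submodule.mem_sInf.2 fun J hJ => hJ.2.2 a (Submodule.mem_sInf.1 ha J hJ) y⟩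

/-- The ideal generated by the squares lies in the right annihilator of `L`. -/
lemma br_squaresIdeal_eq_zero
    (hLeib : ∀ x y z : L, br x (br y z) = br (br x y) z - br (br x z) y)
    {v : L} (hv : v ∈ squaresIdeal br) (x : L) : br x v = 0 := by
  -- The right annihilator is the kernel of `v ↦ [·, v]`.
  have key : squaresIdeal br ≤ LinearMap.ker br.flip := by
    refine squaresIdeal_le (fun y => ?_) ⟨fun a ha y => ?_, fun a ha y => ?_⟩
    · ext z
      simp [hLeib]
    · have h (z : L) : br z a = 0 := LinearMap.congr_fun (LinearMap.mem_ker.1 ha) z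
      ext z
      simp [hLeib, h]
    · have h (z : L) : br z a = 0 := LinearMap.congr_fun (LinearMap.mem_ker.1 ha) z
      ext z
      simp [h]
  exact LinearMap.congr_fun (LinearMap.mem_ker.1 (key hv)) x

lemma derivation_mem_squaresIdeal {d : L →ₗ[F] L}
    (hd : ∀ x y : L, d (br x y) = br (d x) y + br x (d y))
    {v : L} (hv : v ∈ squaresIdeal br) : d v ∈ squaresIdeal br := by
  have hI := squaresIdeal_isLeibnizIdeal (br := br)
  have key : squaresIdeal br ≤ squaresIdeal br ⊓ (squaresIdeal br).comap d := by
    refine squaresIdeal_le (fun x => ⟨sq_mem_squaresIdeal x, ?_⟩)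
      ⟨fun a ha y => ⟨hI.1 a ha.1 y, ?_⟩, fun a ha y => ⟨hI.2 a ha.1 y, ?_⟩⟩
    · have h : d (br x x) = br (d x + x) (d x + x) - br (d x) (d x) - br x x := by
        rw [hd]
        simp only [map_add, LinearMap.add_apply]
        abel
      change d (br x x) ∈ squaresIdeal br
      rw [h]
      exact sub_mem (sub_mem (sq_mem_squaresIdeal _) (sq_mem_squaresIdeal _))
        (sq_mem_squaresIdeal _)
    · change d (br a y) ∈ squaresIdeal br
      rw [hd]
      exact add_mem (hI.1 _ ha.2 _) (hI.1 _ ha.1 _)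
    · change d (br y a) ∈ squaresIdeal br
      rw [hd]
      exact add_mem (hI.2 _ ha.1 _) (hI.2 _ ha.2 _)
  exact (key hv).2

end

/-- Let `L = G ⊕ I` with projections `πG`, `πI`.  Every derivation `d`
satisfies `d(I) ⊆ I`, and `d₀ = πG ∘ d ∘ πG + d ∘ πI` and `d₁ = πI ∘ d ∘ πG` are again
derivations of `L`. -/
theorem graded_components_of_derivation
    {F L : Type*} [Field F] [AddCommGroup L] [Module F L]
    (br : L →ₗ[F] L →ₗ[F] L)
    (hLeib : ∀ x y z : L, br x (br y z) = br (br x y) z - br (br x z) y)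
    (G : Submodule F L)
    (hGclosed : ∀ x ∈ G, ∀ y ∈ G, br x y ∈ G)
    (hdirect : G ⊓ squaresIdeal br = ⊥ ∧ G ⊔ squaresIdeal br = ⊤)
    (piG piI : L →ₗ[F] L)
    (hsum : piG + piI = LinearMap.id)
    (hpiG : ∀ g ∈ G, piG g = g ∧ piI g = 0)
    (hpiI : ∀ v ∈ squaresIdeal br, piI v = v ∧ piG v = 0)
    (d : L →ₗ[F] L)
    (hd : ∀ x y : L, d (br x y) = br (d x) y + br x (d y)) :
    (∀ v ∈ squaresIdeal br, d v ∈ squaresIdeal br) ∧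
    (∀ x y : L, (piG ∘ₗ d ∘ₗ piG + d ∘ₗ piI) (br x y) =
        br ((piG ∘ₗ d ∘ₗ piG + d ∘ₗ piI) x) y + br x ((piG ∘ₗ d ∘ₗ piG + d ∘ₗ piI) y)) ∧
    (∀ x y : L, (piI ∘ₗ d ∘ₗ piG) (br x y) =
        br ((piI ∘ₗ d ∘ₗ piG) x) y + br x ((piI ∘ₗ d ∘ₗ piG) y)) := by
  have hI := squaresIdeal_isLeibnizIdeal (br := br)
  have hdec (x : L) : piG x + piI x = x := LinearMap.congr_fun hsum x
  have hmem (x : L) : piG x ∈ G ∧ piI x ∈ squaresIdeal br := by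
    have hx : x ∈ G ⊔ squaresIdeal br := hdirect.2 ▸ Submodule.mem_top
    obtain ⟨g, hg, v, hv, rfl⟩ := Submodule.mem_sup.1 hx
    simpa [hpiG g hg, hpiI v hv] using And.intro hg hv
  have hzero (x y : L) : br x (piI y) = 0 := br_squaresIdeal_eq_zero hLeib (hmem y).2 x
  have hright (x y : L) : br x (piG y) = br x y := by
    conv_rhs => rw [← hdec y, map_add, hzero, add_zero]
  have hleft (x y : L) : br x y = br (piG x) y + br (piI x) y := by
    rw [← LinearMap.add_apply, ← map_add, hdec]
  have hG (x y : L) : br (piG x) y ∈ G := by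
    rw [← hright]
    exact hGclosed _ (hmem x).1 _ (hmem y).1
  have hIl (x y : L) : br (piI x) y ∈ squaresIdeal br := hI.1 _ (hmem x).2 y
  have hpiG_br (x y : L) : piG (br x y) = br (piG x) y := by
    rw [hleft, map_add, (hpiG _ (hG x y)).1, (hpiI _ (hIl x y)).2, add_zero]
  have hpiI_br (x y : L) : piI (br x y) = br (piI x) y := by
    rw [hleft, map_add, (hpiG _ (hG x y)).2, (hpiI _ (hIl x y)).1, zero_add]
  have h₁ (x y : L) : (piI ∘ₗ d ∘ₗ piG) (br x y) =
      br ((piI ∘ₗ d ∘ₗ piG) x) y + br x ((piI ∘ₗ d ∘ₗ piG) y) := by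
    simp only [LinearMap.comp_apply]
    rw [hpiG_br, hd, map_add, hpiI_br, (hpiG _ (hG x (d y))).2, hzero]
  have h₀ (x : L) : (piG ∘ₗ d ∘ₗ piG + d ∘ₗ piI) x = d x - (piI ∘ₗ d ∘ₗ piG) x := by
    simp only [LinearMap.add_apply, LinearMap.comp_apply]
    rw [eq_sub_iff_add_eq, add_right_comm, hdec, ← map_add, hdec]
  refine ⟨fun v hv => derivation_mem_squaresIdeal hd hv, fun x y => ?_, h₁⟩
  rw [h₀, h₀, h₀, h₁, hd]
  simp only [map_sub, LinearMap.sub_apply]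
  abel
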